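/- arXiv:1110.0104 — 4 statements merged into one kernel-verified Lean document; each statement's English description precedes it below -/
import Mathlib

section
/- Fix an integer j ≥ 1. In the quotient ℂ-vector space A/(z^j·O_U + z^{−j}·O_V), the images of the monomials z^l u^i with 0 ≤ i ≤ n and k·i − j + 1 ≤ l ≤ j − 1 form a ℂ-basis; consequently this quotient has dimension Σ_{i=0}^{n} max(0, 2j − 1 − k·i). (This quotient computes Ext¹_{Z_k^{(n)}}(O(j), O(−j)) via the Čech complex for the two standard charts.) -/
set_option synthInstance.maxHeartbeats 1000000
set_option maxHeartbeats 1000000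

noncomputable section

/-- The ring of Laurent polynomials `ℂ[z,z⁻¹]`. -/
abbrev Lz : Type := LaurentPolynomial ℂ

/-- The ring `P = ℂ[z,z⁻¹][[u]]` of formal power series in `u` with Laurent
polynomial coefficients. -/
abbrev Pz : Type := PowerSeries Lz

/-- The monomial `z^l u^i` as an element of `P`. -/
def mon (l : ℤ) (i : ℕ) : Pz := PowerSeries.monomial i (LaurentPolynomial.T l)

/-- The ideal `(u^{n+1})` of `P`. -/
def In (n : ℕ) : Ideal Pz := Ideal.span {(PowerSeries.X : Pz) ^ (n + 1)}

/-- The ring `A = ℂ[z,z⁻¹][u]/(u^{n+1})`, the coordinate ring of the overlap of the two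
standard charts of the `n`-th infinitesimal neighborhood `Z_k^{(n)}`. -/
abbrev Aq (n : ℕ) : Type := Pz ⧸ In n

/-- The quotient map `P → A`. -/
def toA (n : ℕ) : Pz →+* Aq n := Ideal.Quotient.mk (In n)

/-- The monomial `z^l u^i` as an element of `A`. -/
def monA (n : ℕ) (l : ℤ) (i : ℕ) : Aq n := toA n (mon l i)

/-- `O_U ⊆ A`: the `ℂ`-span of the monomials `z^l u^i` with `l ≥ 0`, `0 ≤ i ≤ n`. -/
def OU (n : ℕ) : Submodule ℂ (Aq n) :=
  Submodule.span ℂ {x | ∃ l : ℤ, ∃ i : ℕ, 0 ≤ l ∧ i ≤ n ∧ x = monA n l i}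

/-- `O_V ⊆ A`: the `ℂ`-span of the monomials `z^l u^i` with `l ≤ k·i`, `0 ≤ i ≤ n`. -/
def OV (k n : ℕ) : Submodule ℂ (Aq n) :=
  Submodule.span ℂ {x | ∃ l : ℤ, ∃ i : ℕ, l ≤ k * i ∧ i ≤ n ∧ x = monA n l i}

/-- The submodule `a·S` obtained from a submodule `S` by multiplying by a fixed element `a`. -/
def msmul {n : ℕ} (a : Aq n) (S : Submodule ℂ (Aq n)) : Submodule ℂ (Aq n) :=
  Submodule.map (LinearMap.mulLeft ℂ a) S

lemma monA_mul (n : ℕ) (l l' : ℤ) (i i' : ℕ) :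
    monA n l i * monA n l' i' = monA n (l + l') (i + i') := by
  unfold monA mon
  rw [← map_mul, PowerSeries.monomial_mul_monomial, LaurentPolynomial.T_add]

/-- coefficient functional on `P` -/
def cP (l : ℤ) (i : ℕ) : Pz →ₗ[ℂ] ℂ where
  toFun p := (PowerSeries.coeff i p : Lz).coeff l
  map_add' p q := by simp
  map_smul' c p := by simp

lemma cP_In (n : ℕ) (l : ℤ) (i : ℕ) (hi : i ≤ n) (p : Pz) (hp : p ∈ In n) : cP l i p = 0 := by
  have h := (PowerSeries.X_pow_dvd_iff.1 (Ideal.mem_span_singleton.1 hp)) i (by omega)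
  simp [cP, h]

/-- coefficient functional on `A` -/
def cA (n : ℕ) (l : ℤ) (i : ℕ) (hi : i ≤ n) : Aq n →ₗ[ℂ] ℂ :=
  Submodule.liftQ ((In n).restrictScalars ℂ) (cP l i) (fun p hp => cP_In n l i hi p hp)

lemma cA_monA (n : ℕ) (l : ℤ) (i : ℕ) (hi : i ≤ n) (l' : ℤ) (i' : ℕ) :
    cA n l i hi (monA n l' i') = if l' = l ∧ i' = i then 1 else 0 := by
  have : cA n l i hi (monA n l' i') = cP l i (mon l' i') := rfl
  rw [this]
  simp only [cP, mon, LinearMap.coe_mk, AddHom.coe_mk, PowerSeries.coeff_monomial]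
  by_cases h : i = i'
  · subst h
    simp [LaurentPolynomial.T, Finsupp.single_apply, -LaurentPolynomial.single_eq_C_mul_T]
  · simp [h, Ne.symm h]

lemma span_Lz (p : Lz) : p ∈ Submodule.span ℂ (Set.range (LaurentPolynomial.T : ℤ → Lz)) := by
  induction p using LaurentPolynomial.induction_on' with
  | add p q hp hq => exact add_mem hp hq
  | C_mul_T m a =>
    rw [← LaurentPolynomial.smul_eq_C_mul]
    exact Submodule.smul_mem _ _ (Submodule.subset_span ⟨m, rfl⟩)

/-- the quotient map as a linear map -/
def toAl (n : ℕ) : Pz →ₗ[ℂ] Aq n where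
  toFun := toA n
  map_add' := map_add _
  map_smul' _ _ := rfl

/-- monomial map as a linear map -/
def monL (i : ℕ) : Lz →ₗ[ℂ] Pz where
  toFun := PowerSeries.monomial i
  map_add' := map_add _
  map_smul' c p := by
    ext1 m
    simp [PowerSeries.coeff_monomial]

lemma span_A (n : ℕ) (M : Submodule ℂ (Aq n)) (hM : ∀ l i, i ≤ n → monA n l i ∈ M) (a : Aq n) :
    a ∈ M := by
  obtain ⟨p, rfl⟩ : ∃ p, toA n p = a := Ideal.Quotient.mk_surjective a
  have h : toA n p = ∑ i ∈ Finset.range (n + 1), toAl n (monL i (PowerSeries.coeff i p)) := by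
    rw [← map_sum]
    change Ideal.Quotient.mk _ _ = Ideal.Quotient.mk _ _
    rw [Ideal.Quotient.eq, In, Ideal.mem_span_singleton, PowerSeries.X_pow_dvd_iff]
    intro m hm
    simp [monL, PowerSeries.coeff_monomial, hm]
  rw [h]
  refine sum_mem fun i hi => ?_
  have hi' : i ≤ n := by simpa [Nat.lt_succ_iff] using hi
  have : Submodule.span ℂ (Set.range (LaurentPolynomial.T : ℤ → Lz)) ≤
      M.comap ((toAl n).comp (monL i)) := by
    rw [Submodule.span_le]
    rintro _ ⟨l, rfl⟩
    exact hM l i hi'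
  exact this (span_Lz _)

/-- index set -/
abbrev Ix (k n : ℕ) (j : ℤ) : Type :=
  {q : ℤ × ℕ // q.2 ≤ n ∧ (k : ℤ) * q.2 - j + 1 ≤ q.1 ∧ q.1 ≤ j - 1}

/-- index set as a sigma type -/
def ixEquiv (k n : ℕ) (j : ℤ) :
    Ix k n j ≃ ((Finset.range (n + 1)).sigma fun i : ℕ => Finset.Icc ((k : ℤ) * i - j + 1) (j - 1)) where
  toFun q := ⟨⟨q.1.2, q.1.1⟩, by
    have := q.2
    simp only [Finset.mem_sigma, Finset.mem_range, Finset.mem_Icc]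
    omega⟩
  invFun s := ⟨(s.1.2, s.1.1), by
    have := s.2
    simp only [Finset.mem_sigma, Finset.mem_range, Finset.mem_Icc] at this
    refine ⟨by simpa using Nat.lt_succ_iff.1 this.1, this.2.1, this.2.2⟩⟩
  left_inv q := rfl
  right_inv s := rfl

lemma ix_card (k n : ℕ) (j : ℤ) :
    (Nat.card (Ix k n j) : ℤ) = ∑ i ∈ Finset.range (n + 1), max 0 (2 * j - 1 - (k : ℤ) * i) := by
  rw [Nat.card_congr (ixEquiv k n j), Nat.card_eq_fintype_card, Fintype.card_coe,
    Finset.card_sigma]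
  push_cast
  refine Finset.sum_congr rfl fun i _ => ?_
  rw [Int.card_Icc]
  generalize (k : ℤ) * i = t
  omega

/-- for `j ≥ 1`, in the quotient `A/(z^j·O_U + z^{−j}·O_V)` the images of the
monomials `z^l u^i` with `0 ≤ i ≤ n` and `k·i − j + 1 ≤ l ≤ j − 1` form a `ℂ`-basis, and the
quotient has dimension `Σ_{i=0}^{n} max(0, 2j − 1 − k·i)`. -/
theorem statement2 (k n : ℕ) (hk : 1 ≤ k) (hn : 1 ≤ n) (j : ℤ) (hj : 1 ≤ j)
    (S : Submodule ℂ (Aq n))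
    (hS : S = msmul (monA n j 0) (OU n) ⊔ msmul (monA n (-j) 0) (OV k n)) :
    LinearIndependent ℂ
      (fun q : {q : ℤ × ℕ // q.2 ≤ n ∧ (k : ℤ) * q.2 - j + 1 ≤ q.1 ∧ q.1 ≤ j - 1} =>
        Submodule.Quotient.mk (p := S) (monA n q.1.1 q.1.2)) ∧
    Submodule.span ℂ
      (Set.range
        (fun q : {q : ℤ × ℕ // q.2 ≤ n ∧ (k : ℤ) * q.2 - j + 1 ≤ q.1 ∧ q.1 ≤ j - 1} =>
          Submodule.Quotient.mk (p := S) (monA n q.1.1 q.1.2))) = ⊤ ∧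
    (Module.finrank ℂ (Aq n ⧸ S) : ℤ) =
      ∑ i ∈ Finset.range (n + 1), max 0 (2 * j - 1 - (k : ℤ) * i) := by
  have hker : ∀ q : Ix k n j, S ≤ LinearMap.ker (cA n q.1.1 q.1.2 q.2.1) := by
    intro q
    have hq := q.2
    rw [hS]
    refine sup_le ?_ ?_
    · unfold msmul OU
      rw [Submodule.map_le_iff_le_comap, Submodule.span_le]
      rintro _ ⟨l, i, hl, hi, rfl⟩
      simp only [SetLike.mem_coe, Submodule.mem_comap, LinearMap.mulLeft_apply, LinearMap.mem_ker]
      rw [monA_mul, cA_monA, if_neg]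
      omega
    · unfold msmul OV
      rw [Submodule.map_le_iff_le_comap, Submodule.span_le]
      rintro _ ⟨l, i, hl, hi, rfl⟩
      simp only [SetLike.mem_coe, Submodule.mem_comap, LinearMap.mulLeft_apply, LinearMap.mem_ker]
      rw [monA_mul, cA_monA, if_neg]
      rintro ⟨h1, h2⟩
      rw [zero_add] at h2
      rw [← h2] at hq
      omega
  have hli : LinearIndependent ℂ
      (fun q : Ix k n j => Submodule.Quotient.mk (p := S) (monA n q.1.1 q.1.2)) := by
    let Φ : (Aq n ⧸ S) →ₗ[ℂ] (Ix k n j → ℂ) :=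
      LinearMap.pi fun q => S.liftQ (cA n q.1.1 q.1.2 q.2.1) (hker q)
    apply LinearIndependent.of_comp Φ
    classical
    convert Pi.linearIndependent_single_one (Ix k n j) ℂ using 1
    funext q r
    change cA n r.1.1 r.1.2 r.2.1 (monA n q.1.1 q.1.2) = _
    rw [cA_monA, Pi.single_apply]
    congr 1
    rw [← Prod.ext_iff, ← Subtype.ext_iff]
    exact propext eq_comm
  have hsp : Submodule.span ℂ
      (Set.range (fun q : Ix k n j => Submodule.Quotient.mk (p := S) (monA n q.1.1 q.1.2)))
        = ⊤ := by
    rw [eq_top_iff]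
    rintro x -
    obtain ⟨a, rfl⟩ := Submodule.Quotient.mk_surjective S x
    refine span_A n (Submodule.comap S.mkQ (Submodule.span ℂ (Set.range
      (fun q : Ix k n j => Submodule.Quotient.mk (p := S) (monA n q.1.1 q.1.2))))) ?_ a
    intro l i hi
    rw [Submodule.mem_comap, Submodule.mkQ_apply]
    by_cases h1 : j ≤ l
    · rw [(Submodule.Quotient.mk_eq_zero S).2]
      · exact zero_mem _
      rw [hS]
      refine Submodule.mem_sup_left ⟨monA n (l - j) i,
        Submodule.subset_span ⟨l - j, i, by omega, hi, rfl⟩, ?_⟩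
      rw [LinearMap.mulLeft_apply, monA_mul, zero_add]
      congr 1
      omega
    by_cases h2 : l ≤ k * i - j
    · rw [(Submodule.Quotient.mk_eq_zero S).2]
      · exact zero_mem _
      rw [hS]
      refine Submodule.mem_sup_right ⟨monA n (l + j) i,
        Submodule.subset_span ⟨l + j, i, by omega, hi, rfl⟩, ?_⟩
      rw [LinearMap.mulLeft_apply, monA_mul, zero_add]
      congr 1
      omega
    · exact Submodule.subset_span ⟨⟨(l, i), hi, by simp only; omega, by simp only; omega⟩, rfl⟩
  refine ⟨hli, hsp, ?_⟩
  rw [← ix_card, Module.finrank_eq_nat_card_basis (Module.Basis.mk hli hsp.ge)]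
end
end

section
/- Fix an integer j ≥ 1. In the quotient ℂ-vector space P/(z^j·O_U^∞ + z^{−j}·O_V^∞), the images of the monomials z^l u^i with i ≥ 0 and k·i − j + 1 ≤ l ≤ j − 1 form a ℂ-basis; in particular this quotient is finite dimensional of dimension Σ_{i ≥ 0} max(0, 2j − 1 − k·i) (a finite sum, since the summand vanishes for k·i > 2j − 2). (This quotient computes Ext¹(O(j), O(−j)) on the formal neighborhood of the zero section, which is thus finite dimensional.) -/
set_option synthInstance.maxHeartbeats 1000000
set_option maxHeartbeats 1000000

noncomputable section

/-- The coefficient of `z^l` in a Laurent polynomial, as a `ℂ`-linear map. -/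
def coeffL (l : ℤ) : Lz →ₗ[ℂ] ℂ :=
  (Finsupp.lapply l).comp (AddMonoidAlgebra.coeffLinearEquiv ℂ).toLinearMap

/-- The coefficient of `z^l u^i` in an element of `P`, as a `ℂ`-linear map. -/
def coeffP (l : ℤ) (i : ℕ) : Pz →ₗ[ℂ] ℂ :=
  (coeffL l).comp ((PowerSeries.coeff i).restrictScalars ℂ)

/-- `O_U^∞ ⊆ P`: elements whose `u^i`-coefficient, for every `i`, is supported in
`z`-degrees `≥ 0`. -/
def OUinf : Submodule ℂ Pz where
  carrier := {f | ∀ (i : ℕ) (l : ℤ), l < 0 → coeffP l i f = 0}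
  add_mem' := by
    intro f g hf hg i l hl
    simp only [Set.mem_setOf_eq] at *
    rw [map_add, hf i l hl, hg i l hl, add_zero]
  zero_mem' := by intro i l _; simp
  smul_mem' := by
    intro c f hf i l hl
    simp only [Set.mem_setOf_eq] at *
    rw [map_smul, hf i l hl, smul_zero]

/-- `O_V^∞ ⊆ P`: elements whose `u^i`-coefficient, for every `i`, is supported in
`z`-degrees `≤ k·i`. -/
def OVinf (k : ℕ) : Submodule ℂ Pz where
  carrier := {f | ∀ (i : ℕ) (l : ℤ), (k : ℤ) * i < l → coeffP l i f = 0}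
  add_mem' := by
    intro f g hf hg i l hl
    simp only [Set.mem_setOf_eq] at *
    rw [map_add, hf i l hl, hg i l hl, add_zero]
  zero_mem' := by intro i l _; simp
  smul_mem' := by
    intro c f hf i l hl
    simp only [Set.mem_setOf_eq] at *
    rw [map_smul, hf i l hl, smul_zero]

/-- The submodule `a·S` obtained from a submodule `S ⊆ P` by multiplying by `a`. -/
def msmulP (a : Pz) (S : Submodule ℂ Pz) : Submodule ℂ Pz :=
  Submodule.map (LinearMap.mulLeft ℂ a) S

lemma coeffP_apply (l : ℤ) (i : ℕ) (f : Pz) :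
    coeffP l i f = AddMonoidAlgebra.coeff (PowerSeries.coeff i f) l := rfl

lemma Pz_ext {f g : Pz} (h : ∀ l i, coeffP l i f = coeffP l i g) : f = g := by
  apply PowerSeries.ext
  intro i
  apply LaurentPolynomial.ext
  intro l
  exact h l i

lemma coeffP_mon_mul (a l : ℤ) (i : ℕ) (f : Pz) :
    coeffP l i (mon a 0 * f) = coeffP (l - a) i f := by
  rw [coeffP_apply, coeffP_apply, mon, PowerSeries.monomial_zero_eq_C_apply,
    PowerSeries.coeff_C_mul, LaurentPolynomial.T, AddMonoidAlgebra.coeff_single_mul_apply,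
    one_mul]
  congr 1
  ring

lemma coeffP_mon (a l : ℤ) (b i : ℕ) :
    coeffP l i (mon a b) = if l = a ∧ i = b then 1 else 0 := by
  rw [coeffP_apply, mon, PowerSeries.coeff_monomial]
  by_cases h : i = b
  · rw [if_pos h, LaurentPolynomial.T, AddMonoidAlgebra.coeff_single_apply]
    simp [h, eq_comm]
  · simp [h]

lemma mon_mul_cancel (a : ℤ) (f : Pz) : mon a 0 * (mon (-a) 0 * f) = f := by
  apply Pz_ext
  intro l i
  rw [coeffP_mon_mul, coeffP_mon_mul]
  congr 2
  ring

/-- the part of `f` in `z`-degrees `≥ j`. -/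
def upperPart (j : ℤ) (f : Pz) : Pz :=
  PowerSeries.mk fun i =>
    AddMonoidAlgebra.ofCoeff ((AddMonoidAlgebra.coeff (PowerSeries.coeff i f)).filter (j ≤ ·))

lemma coeffP_upperPart (j l : ℤ) (i : ℕ) (f : Pz) :
    coeffP l i (upperPart j f) = if j ≤ l then coeffP l i f else 0 := by
  rw [coeffP_apply, coeffP_apply, upperPart, PowerSeries.coeff_mk,
    AddMonoidAlgebra.coeff_ofCoeff, Finsupp.filter_apply]

lemma mem_sum_iff (k : ℕ) (j : ℤ) (f : Pz) :
    f ∈ msmulP (mon j 0) OUinf ⊔ msmulP (mon (-j) 0) (OVinf k) ↔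
      ∀ (l : ℤ) (i : ℕ), (k : ℤ) * i - j + 1 ≤ l → l ≤ j - 1 → coeffP l i f = 0 := by
  rw [Submodule.mem_sup]
  constructor
  · rintro ⟨_, ⟨g, hg, rfl⟩, _, ⟨h, hh, rfl⟩, rfl⟩ l i h1 h2
    rw [map_add, LinearMap.mulLeft_apply, LinearMap.mulLeft_apply, coeffP_mon_mul,
      coeffP_mon_mul, hg i _ (by linarith), hh i _ (by linarith), add_zero]
  · intro hf
    refine ⟨upperPart j f, ⟨mon (-j) 0 * upperPart j f, ?_, mon_mul_cancel _ _⟩,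
      f - upperPart j f, ⟨mon j 0 * (f - upperPart j f), ?_, ?_⟩, by abel⟩
    · intro i l hl
      rw [coeffP_mon_mul, coeffP_upperPart, if_neg (by linarith)]
    · intro i l hl
      rw [coeffP_mon_mul, map_sub, coeffP_upperPart]
      split_ifs with h
      · simp
      · rw [hf _ _ (by linarith) (by linarith), sub_zero]
    · have := mon_mul_cancel (-j) (f - upperPart j f)
      rwa [neg_neg] at this

/-- The index set of the basis. -/
abbrev Idx (k : ℕ) (j : ℤ) : Type :=
  {q : ℤ × ℕ // (k : ℤ) * q.2 - j + 1 ≤ q.1 ∧ q.1 ≤ j - 1}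

/-- Index set as a finite set. -/
def idxFinset (k : ℕ) (j : ℤ) (N : ℕ) : Finset ((_ : ℕ) × ℤ) :=
  (Finset.range N).sigma fun i => Finset.Icc ((k : ℤ) * i - j + 1) (j - 1)

/-- Index set is equivalent to that finite set. -/
def idxEquiv (k : ℕ) (hk : 1 ≤ k) (j : ℤ) (N : ℕ) (hN : 2 * j ≤ N) :
    Idx k j ≃ idxFinset k j N where
  toFun q := ⟨⟨q.1.2, q.1.1⟩, by
    obtain ⟨⟨l, i⟩, h1, h2⟩ := q
    simp only [idxFinset, Finset.mem_sigma, Finset.mem_range, Finset.mem_Icc] at *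
    refine ⟨?_, h1, h2⟩
    have hk' : (1 : ℤ) ≤ k := by exact_mod_cast hk
    have : (i : ℤ) ≤ k * i := le_mul_of_one_le_left (by positivity) hk'
    have : (i : ℤ) < N := by linarith
    exact_mod_cast this⟩
  invFun q := ⟨(q.1.2, q.1.1), by
    have := q.2
    simp only [idxFinset, Finset.mem_sigma, Finset.mem_range, Finset.mem_Icc] at this
    exact this.2⟩
  left_inv _ := rfl
  right_inv _ := rfl

lemma card_idx (k : ℕ) (hk : 1 ≤ k) (j : ℤ) (N : ℕ) (hN : 2 * j ≤ N) :
    (Nat.card (Idx k j) : ℤ) = ∑ i ∈ Finset.range N, max 0 (2 * j - 1 - (k : ℤ) * i) := by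
  rw [Nat.card_congr (idxEquiv k hk j N hN), Nat.card_eq_fintype_card, Fintype.card_coe,
    idxFinset, Finset.card_sigma, Nat.cast_sum]
  refine Finset.sum_congr rfl fun i _ => ?_
  rw [Int.card_Icc, Int.toNat_eq_max, max_comm]
  congr 1
  ring

/-- Read off the coefficients in the index set. -/
def coeffMap (k : ℕ) (j : ℤ) : Pz →ₗ[ℂ] (Idx k j → ℂ) :=
  LinearMap.pi fun q => coeffP q.1.1 q.1.2

lemma coeffMap_mon (k : ℕ) (j : ℤ) (q : Idx k j) :
    coeffMap k j (mon q.1.1 q.1.2) = Pi.single q 1 := by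
  classical
  funext r
  rw [coeffMap, LinearMap.pi_apply, coeffP_mon, Pi.single_apply]
  congr 1
  rw [Subtype.ext_iff, Prod.ext_iff]

lemma ker_coeffMap (k : ℕ) (j : ℤ) :
    LinearMap.ker (coeffMap k j) =
      msmulP (mon j 0) OUinf ⊔ msmulP (mon (-j) 0) (OVinf k) := by
  ext f
  rw [mem_sum_iff, LinearMap.mem_ker, funext_iff]
  constructor
  · intro h l i h1 h2
    exact h ⟨(l, i), h1, h2⟩
  · intro h q
    exact h _ _ q.2.1 q.2.2

lemma coeffMap_surjective (k : ℕ) (j : ℤ) [Finite (Idx k j)] :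
    Function.Surjective (coeffMap k j) := by
  classical
  have := Fintype.ofFinite (Idx k j)
  intro v
  refine ⟨∑ q, v q • mon q.1.1 q.1.2, ?_⟩
  rw [map_sum]
  simp_rw [map_smul, coeffMap_mon]
  exact (pi_eq_sum_univ' v).symm

/-- for `j ≥ 1`, in the quotient `P/(z^j·O_U^∞ + z^{−j}·O_V^∞)` the images of the
monomials `z^l u^i` with `i ≥ 0` and `k·i − j + 1 ≤ l ≤ j − 1` form a `ℂ`-basis; in particular
the quotient is finite dimensional, of dimension `Σ_{i ≥ 0} max(0, 2j − 1 − k·i)` (a finite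
sum: all terms with `k·i > 2j − 2` vanish, so the partial sums are eventually constant). -/
theorem statement3 (k : ℕ) (hk : 1 ≤ k) (j : ℤ) (hj : 1 ≤ j)
    (S : Submodule ℂ Pz)
    (hS : S = msmulP (mon j 0) OUinf ⊔ msmulP (mon (-j) 0) (OVinf k)) :
    LinearIndependent ℂ
      (fun q : {q : ℤ × ℕ // (k : ℤ) * q.2 - j + 1 ≤ q.1 ∧ q.1 ≤ j - 1} =>
        Submodule.Quotient.mk (p := S) (mon q.1.1 q.1.2)) ∧
    Submodule.span ℂ
      (Set.range
        (fun q : {q : ℤ × ℕ // (k : ℤ) * q.2 - j + 1 ≤ q.1 ∧ q.1 ≤ j - 1} =>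
          Submodule.Quotient.mk (p := S) (mon q.1.1 q.1.2))) = ⊤ ∧
    FiniteDimensional ℂ (Pz ⧸ S) ∧
    (∀ N : ℕ, 2 * j ≤ (N : ℤ) →
      (Module.finrank ℂ (Pz ⧸ S) : ℤ) =
        ∑ i ∈ Finset.range N, max 0 (2 * j - 1 - (k : ℤ) * i)) := by
  classical
  have hfin : Finite (Idx k j) :=
    Finite.of_equiv _ (idxEquiv k hk j (2 * j).toNat (Int.self_le_toNat _)).symm
  have := Fintype.ofFinite (Idx k j)
  rw [← ker_coeffMap] at hS
  subst hS
  let e := (coeffMap k j).quotKerEquivOfSurjective (coeffMap_surjective k j)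
  let b := Module.Basis.ofEquivFun e
  have hb : (fun q : Idx k j =>
      Submodule.Quotient.mk (p := LinearMap.ker (coeffMap k j)) (mon q.1.1 q.1.2)) = b := by
    funext q
    apply e.injective
    rw [Module.Basis.coe_ofEquivFun, LinearEquiv.apply_symm_apply]
    exact coeffMap_mon k j q
  refine ⟨?_, ?_, Module.Basis.finiteDimensional_of_finite b, ?_⟩
  · exact hb ▸ b.linearIndependent
  · exact hb ▸ b.span_eq
  · intro N hN
    rw [Module.finrank_eq_nat_card_basis b]
    exact card_idx k hk j N hN
end
end

section
/- Take n = 1 (so A = ℂ[z,z⁻¹][u]/(u²)) and fix an integer j ≥ 1, and let R ⊆ A be the ℂ-span of the monomials z^l·u with k − j + 1 ≤ l ≤ j − 1. For all p, p′ ∈ R, the bundles E_p and E_{p′} on the first infinitesimal neighborhood Z_k^{(1)} are isomorphic (i.e. E_p ≅ E_{p′}) if and only if there exists λ ∈ ℂ with λ ≠ 0 such that p′ = λ·p. -/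
set_option synthInstance.maxHeartbeats 1000000
set_option maxHeartbeats 1000000

noncomputable section

/-- `R ⊆ A`: the `ℂ`-span of the monomials `z^l u^i` with `1 ≤ i ≤ n` and
`k·i − j + 1 ≤ l ≤ j − 1` (the space of normal forms of extension classes). -/
def Rmod (k n : ℕ) (j : ℤ) : Submodule ℂ (Aq n) :=
  Submodule.span ℂ
    {x | ∃ l : ℤ, ∃ i : ℕ, 1 ≤ i ∧ i ≤ n ∧ (k : ℤ) * i - j + 1 ≤ l ∧ l ≤ j - 1 ∧ x = monA n l i}

/-- The transition matrix `M_p = ((z^j, p),(0, z^{−j}))` of the bundle `E_p`. -/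
def Mmat (n : ℕ) (j : ℤ) (p : Aq n) : Matrix (Fin 2) (Fin 2) (Aq n) :=
  !![monA n j 0, p; 0, monA n (-j) 0]

/-- `E_p ≅ E_{p′}`: there are matrices `A₁` with entries in `O_U` and `B₁` with entries
in `O_V`, with `det A₁` a unit of `O_U` and `det B₁` a unit of `O_V`, with
`B₁ · M_p = M_{p′} · A₁`. -/
def BundleIso (k n : ℕ) (j : ℤ) (p p' : Aq n) : Prop :=
  ∃ A₁ B₁ : Matrix (Fin 2) (Fin 2) (Aq n),
    (∀ a b : Fin 2, A₁ a b ∈ OU n) ∧ (∀ a b : Fin 2, B₁ a b ∈ OV k n) ∧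
    (∃ w ∈ OU n, A₁.det * w = 1) ∧ (∃ w ∈ OV k n, B₁.det * w = 1) ∧
    B₁ * Mmat n j p = Mmat n j p' * A₁

/-- The coefficient of `u^i` of an element of `A` (meaningful for `i ≤ 1`). -/
def cf (i : ℕ) (x : Aq 1) : Lz := PowerSeries.coeff i (Quotient.out x : Pz)

theorem toA_eq_iff (X Y : Pz) :
    toA 1 X = toA 1 Y ↔ ∀ i, i < 2 → PowerSeries.coeff i X = PowerSeries.coeff i Y := by
  have h : toA 1 X = toA 1 Y ↔ X - Y ∈ In 1 := Ideal.Quotient.eq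
  rw [h]
  unfold In
  rw [Ideal.mem_span_singleton, PowerSeries.X_pow_dvd_iff]
  simp only [map_sub, sub_eq_zero]

theorem toA_out (x : Aq 1) : toA 1 (Quotient.out x : Pz) = x := Ideal.Quotient.mk_out x

theorem cf_toA (i : ℕ) (hi : i < 2) (X : Pz) : cf i (toA 1 X) = PowerSeries.coeff i X :=
  (toA_eq_iff _ _).1 (toA_out (toA 1 X)) i hi

theorem toA_surj (x : Aq 1) : ∃ X, toA 1 X = x := ⟨_, toA_out x⟩

theorem cf_ext (x y : Aq 1) (h : ∀ i, i < 2 → cf i x = cf i y) : x = y := by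
  rw [← toA_out x, ← toA_out y, toA_eq_iff]
  exact h

theorem cf_add (i : ℕ) (hi : i < 2) (x y : Aq 1) : cf i (x + y) = cf i x + cf i y := by
  obtain ⟨X, rfl⟩ := toA_surj x
  obtain ⟨Y, rfl⟩ := toA_surj y
  rw [← map_add, cf_toA i hi, cf_toA i hi, cf_toA i hi, map_add]

theorem cf_sub (i : ℕ) (hi : i < 2) (x y : Aq 1) : cf i (x - y) = cf i x - cf i y := by
  obtain ⟨X, rfl⟩ := toA_surj x
  obtain ⟨Y, rfl⟩ := toA_surj y
  rw [← map_sub, cf_toA i hi, cf_toA i hi, cf_toA i hi, map_sub]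

theorem cf_zero (i : ℕ) (hi : i < 2) : cf i 0 = 0 := by
  rw [← map_zero (toA 1), cf_toA i hi, map_zero]

theorem cf_one : cf 0 1 = 1 := by
  rw [← map_one (toA 1), cf_toA 0 (by norm_num)]
  simp

theorem toA_smul (c : ℂ) (X : Pz) : toA 1 (c • X) = c • toA 1 X := rfl

theorem cf_smul (i : ℕ) (hi : i < 2) (c : ℂ) (x : Aq 1) : cf i (c • x) = c • cf i x := by
  obtain ⟨X, rfl⟩ := toA_surj x
  rw [← toA_smul, cf_toA i hi, cf_toA i hi]
  rfl

theorem cf0_mul (x y : Aq 1) : cf 0 (x * y) = cf 0 x * cf 0 y := by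
  obtain ⟨X, rfl⟩ := toA_surj x
  obtain ⟨Y, rfl⟩ := toA_surj y
  rw [← map_mul]
  simp only [cf_toA 0 (by norm_num : 0 < 2)]
  simp

theorem cf1_mul (x y : Aq 1) : cf 1 (x * y) = cf 0 x * cf 1 y + cf 1 x * cf 0 y := by
  obtain ⟨X, rfl⟩ := toA_surj x
  obtain ⟨Y, rfl⟩ := toA_surj y
  rw [← map_mul]
  simp only [cf_toA 0 (by norm_num : 0 < 2), cf_toA 1 (by norm_num : 1 < 2)]
  rw [PowerSeries.coeff_mul, Finset.Nat.antidiagonal_succ]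
  simp

theorem cf_monA (i : ℕ) (hi : i < 2) (l : ℤ) (m : ℕ) :
    cf i (monA 1 l m) = if i = m then LaurentPolynomial.T l else 0 := by
  unfold monA mon
  rw [cf_toA i hi, PowerSeries.coeff_monomial]

theorem span_supp (Q : ℤ → ℕ → Prop) (S : Set (Aq 1))
    (hS : ∀ x ∈ S, ∃ l i, Q l i ∧ x = monA 1 l i) (x : Aq 1) (hx : x ∈ Submodule.span ℂ S)
    (i : ℕ) (hi : i < 2) (l : ℤ) (hQ : ¬ Q l i) : (cf i x).coeff l = 0 := by
  induction hx using Submodule.span_induction with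
  | mem x h =>
    obtain ⟨l', i', h', rfl⟩ := hS x h
    rw [cf_monA i hi]
    split_ifs with h1
    · subst h1
      rw [LaurentPolynomial.T_apply, if_neg]
      rintro rfl
      exact hQ h'
    · rfl
  | zero => rw [cf_zero i hi]; rfl
  | add x y _ _ h1 h2 =>
    rw [cf_add i hi, AddMonoidAlgebra.coeff_add, Finsupp.add_apply, h1, h2, add_zero]
  | smul c x _ h1 =>
    rw [cf_smul i hi, AddMonoidAlgebra.coeff_smul, Finsupp.smul_apply, h1, smul_zero]

theorem OU_supp (x : Aq 1) (hx : x ∈ OU 1) (i : ℕ) (hi : i < 2) (l : ℤ) (hl : l < 0) :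
    (cf i x).coeff l = 0 :=
  span_supp (fun l _ => 0 ≤ l) _
    (by rintro x ⟨l, i, h1, _, h2⟩; exact ⟨l, i, h1, h2⟩) x hx i hi l (by simpa using hl)

theorem OV_supp (k : ℕ) (x : Aq 1) (hx : x ∈ OV k 1) (i : ℕ) (hi : i < 2) (l : ℤ)
    (hl : (k : ℤ) * i < l) : (cf i x).coeff l = 0 :=
  span_supp (fun l i => l ≤ k * i) _
    (by rintro x ⟨l, i, h1, _, h2⟩; exact ⟨l, i, h1, h2⟩) x hx i hi l (by simpa using hl)

theorem R_supp (k : ℕ) (j : ℤ) (x : Aq 1) (hx : x ∈ Rmod k 1 j) (i : ℕ) (hi : i < 2) (l : ℤ)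
    (hl : ¬ (1 ≤ i ∧ (k : ℤ) * i - j + 1 ≤ l ∧ l ≤ j - 1)) : (cf i x).coeff l = 0 :=
  span_supp (fun l i => 1 ≤ i ∧ (k : ℤ) * i - j + 1 ≤ l ∧ l ≤ j - 1) _
    (by rintro x ⟨l, i, h1, _, h2, h3, h4⟩; exact ⟨l, i, ⟨h1, h2, h3⟩, h4⟩) x hx i hi l hl

theorem coeff_T_mul (m l : ℤ) (f : Lz) :
    (LaurentPolynomial.T m * f).coeff l = f.coeff (l - m) := by
  unfold LaurentPolynomial.T
  rw [AddMonoidAlgebra.coeff_single_mul_eq_mul_coeff (m₂ := l - m), one_mul]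
  intro a _
  constructor <;> intro h <;> omega

theorem T_mul_cancel (m : ℤ) (f g : Lz)
    (h : LaurentPolynomial.T m * f = LaurentPolynomial.T m * g) : f = g :=
  (LaurentPolynomial.isUnit_T m).mul_left_cancel h

/-- A Laurent polynomial that is both in `ℂ[z]` and `ℂ[z⁻¹]` is constant. -/
theorem eq_const (f : Lz) (h1 : ∀ l, l < 0 → f.coeff l = 0) (h2 : ∀ l, 0 < l → f.coeff l = 0) :
    f = LaurentPolynomial.C (f.coeff 0) := by
  apply LaurentPolynomial.ext
  intro l
  rw [LaurentPolynomial.C_apply]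
  rcases lt_trichotomy l 0 with h | h | h
  · rw [h1 l h, if_neg h.ne]
  · simp [h]
  · rw [h2 l h, if_neg h.ne']

theorem one_eq_monA : (1 : Aq 1) = monA 1 0 0 := by
  unfold monA mon
  rw [LaurentPolynomial.T_zero, PowerSeries.monomial_zero_eq_C_apply, map_one, map_one]

theorem one_mem_OU : (1 : Aq 1) ∈ OU 1 :=
  Submodule.subset_span ⟨0, 0, le_refl _, by norm_num, one_eq_monA⟩

theorem one_mem_OV (k : ℕ) : (1 : Aq 1) ∈ OV k 1 :=
  Submodule.subset_span ⟨0, 0, by simp, by norm_num, one_eq_monA⟩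

theorem iso_of_smul (k : ℕ) (j : ℤ) (p : Aq 1) (c : ℂ) (hc : c ≠ 0) :
    BundleIso k 1 j p (c • p) := by
  have key : ∀ S : Submodule ℂ (Aq 1), (1 : Aq 1) ∈ S →
      ∀ a b : Fin 2, (!![c • (1 : Aq 1), 0; 0, 1] : Matrix (Fin 2) (Fin 2) (Aq 1)) a b ∈ S := by
    intro S hS a b
    fin_cases a <;> fin_cases b
    · exact S.smul_mem c hS
    · exact S.zero_mem
    · exact S.zero_mem
    · exact hS
  have hdet : (!![c • (1 : Aq 1), 0; 0, 1] : Matrix (Fin 2) (Fin 2) (Aq 1)).det *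
      (c⁻¹ • (1 : Aq 1)) = 1 := by
    rw [Matrix.det_fin_two_of]
    rw [mul_one, mul_zero, sub_zero, smul_mul_smul_comm, mul_inv_cancel₀ hc, one_mul, one_smul]
  refine ⟨!![c • (1 : Aq 1), 0; 0, 1], !![c • (1 : Aq 1), 0; 0, 1], key _ one_mem_OU,
    key _ (one_mem_OV k), ⟨c⁻¹ • 1, Submodule.smul_mem _ _ one_mem_OU, hdet⟩,
    ⟨c⁻¹ • 1, Submodule.smul_mem _ _ (one_mem_OV k), hdet⟩, ?_⟩
  unfold Mmat
  rw [Matrix.mul_fin_two, Matrix.mul_fin_two]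
  simp

theorem smul_of_iso (k : ℕ) (j : ℤ) (hj : 1 ≤ j)
    (p p' : Aq 1) (hp : p ∈ Rmod k 1 j) (hp' : p' ∈ Rmod k 1 j)
    (h : BundleIso k 1 j p p') : ∃ lam : ℂ, lam ≠ 0 ∧ p' = lam • p := by
  obtain ⟨A, B, hA, hB, ⟨w, hw, hdet⟩, -, heq⟩ := h
  have h0 : (0 : ℕ) < 2 := by norm_num
  have h1 : (1 : ℕ) < 2 := by norm_num
  have p0 : cf 0 p = 0 := by
    apply LaurentPolynomial.ext
    intro l
    exact R_supp k j p hp 0 h0 l (by simp)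
  have p0' : cf 0 p' = 0 := by
    apply LaurentPolynomial.ext
    intro l
    exact R_supp k j p' hp' 0 h0 l (by simp)
  have m0 : ∀ l, cf 0 (monA 1 l 0) = LaurentPolynomial.T l := fun l => by
    rw [cf_monA 0 h0]; rfl
  have m1 : ∀ l, cf 1 (monA 1 l 0) = 0 := fun l => by
    rw [cf_monA 1 h1]; rfl
  have e00 : B 0 0 * monA 1 j 0 = monA 1 j 0 * A 0 0 + p' * A 1 0 := by
    have := congrFun (congrFun heq 0) 0
    simpa [Matrix.mul_apply, Fin.sum_univ_two, Mmat] using this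
  have e01 : B 0 0 * p + B 0 1 * monA 1 (-j) 0 = monA 1 j 0 * A 0 1 + p' * A 1 1 := by
    have := congrFun (congrFun heq 0) 1
    simpa [Matrix.mul_apply, Fin.sum_univ_two, Mmat] using this
  have e11 : B 1 0 * p + B 1 1 * monA 1 (-j) 0 = monA 1 (-j) 0 * A 1 1 := by
    have := congrFun (congrFun heq 1) 1
    simpa [Matrix.mul_apply, Fin.sum_univ_two, Mmat] using this
  -- order zero
  have f00 : cf 0 (B 0 0) = cf 0 (A 0 0) := by
    have := congrArg (cf 0) e00
    rw [cf_add 0 h0, cf0_mul, cf0_mul, cf0_mul, m0, p0', zero_mul, add_zero, mul_comm] at this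
    exact T_mul_cancel _ _ _ this
  have f11 : cf 0 (B 1 1) = cf 0 (A 1 1) := by
    have := congrArg (cf 0) e11
    rw [cf_add 0 h0, cf0_mul, cf0_mul, cf0_mul, m0, p0, mul_zero, zero_add, mul_comm] at this
    exact T_mul_cancel _ _ _ this
  have f01 : LaurentPolynomial.T (-j) * cf 0 (B 0 1) = LaurentPolynomial.T j * cf 0 (A 0 1) := by
    have := congrArg (cf 0) e01
    rw [cf_add 0 h0, cf_add 0 h0, cf0_mul, cf0_mul, cf0_mul, cf0_mul, m0, m0, p0, p0', mul_zero,
      zero_add, zero_mul, add_zero, mul_comm] at this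
    exact this
  have hA01 : cf 0 (A 0 1) = 0 := by
    apply LaurentPolynomial.ext
    intro l
    by_cases hl : l < 0
    · exact OU_supp _ (hA 0 1) 0 h0 l hl
    · have := congrArg (fun f : Lz => f.coeff (l + j)) f01
      simp only [coeff_T_mul] at this
      rw [OV_supp k _ (hB 0 1) 0 h0 _ (by push_cast; omega)] at this
      rw [add_sub_cancel_right] at this
      exact this.symm
  have cA00 := eq_const (cf 0 (A 0 0)) (OU_supp _ (hA 0 0) 0 h0)
    (fun l hl => by rw [← f00]; exact OV_supp k _ (hB 0 0) 0 h0 l (by simpa using hl))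
  have cA11 := eq_const (cf 0 (A 1 1)) (OU_supp _ (hA 1 1) 0 h0)
    (fun l hl => by rw [← f11]; exact OV_supp k _ (hB 1 1) 0 h0 l (by simpa using hl))
  set a := (cf 0 (A 0 0)).coeff 0 with ha
  set d := (cf 0 (A 1 1)).coeff 0 with hd
  have hdet0 : LaurentPolynomial.C a * LaurentPolynomial.C d * cf 0 w = 1 := by
    have := congrArg (cf 0) hdet
    rw [cf0_mul, Matrix.det_fin_two, cf_sub 0 h0, cf0_mul, cf0_mul, hA01, zero_mul, sub_zero,
      cf_one, cA00, cA11] at this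
    exact this
  have ha0 : a ≠ 0 := by
    intro h
    rw [h, map_zero, zero_mul, zero_mul] at hdet0
    exact zero_ne_one hdet0
  have hd0 : d ≠ 0 := by
    intro h
    rw [h, map_zero, mul_zero, zero_mul] at hdet0
    exact zero_ne_one hdet0
  -- order one
  have g01 : a • cf 1 p + LaurentPolynomial.T (-j) * cf 1 (B 0 1) =
      LaurentPolynomial.T j * cf 1 (A 0 1) + d • cf 1 p' := by
    have := congrArg (cf 1) e01
    rw [cf_add 1 h1, cf_add 1 h1, cf1_mul, cf1_mul, cf1_mul, cf1_mul, m0, m0, m1, m1, p0, p0',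
      f00, cA00, cA11, mul_zero, add_zero, mul_zero, zero_mul, zero_mul, zero_add, zero_add,
      add_zero] at this
    rw [LaurentPolynomial.smul_eq_C_mul, LaurentPolynomial.smul_eq_C_mul,
      mul_comm _ (cf 1 p'), mul_comm _ (cf 1 (B 0 1))]
    exact this
  refine ⟨a / d, div_ne_zero ha0 hd0, cf_ext _ _ ?_⟩
  intro i hi
  rw [cf_smul i hi]
  interval_cases i
  · rw [p0, p0', smul_zero]
  · apply LaurentPolynomial.ext
    intro l
    rw [AddMonoidAlgebra.coeff_smul, Finsupp.smul_apply, smul_eq_mul]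
    by_cases hl : (k : ℤ) * (1 : ℕ) - j + 1 ≤ l ∧ l ≤ j - 1
    · have := congrArg (fun f : Lz => f.coeff l) g01
      simp only [AddMonoidAlgebra.coeff_add, Finsupp.add_apply, AddMonoidAlgebra.coeff_smul,
        Finsupp.smul_apply, smul_eq_mul, coeff_T_mul] at this
      rw [OV_supp k _ (hB 0 1) 1 h1 _ (by omega), OU_supp _ (hA 0 1) 1 h1 _ (by omega),
        zero_add, add_zero] at this
      field_simp
      rw [this, mul_comm]
    · rw [R_supp k j p hp 1 h1 l (by tauto), R_supp k j p' hp' 1 h1 l (by tauto), mul_zero]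

/-- on the first infinitesimal neighborhood (`n = 1`), for `p, p′` in the space
`R` of normal forms, `E_p ≅ E_{p′}` if and only if `p′ = λ·p` for some nonzero `λ ∈ ℂ`. -/
theorem statement10 (k : ℕ) (hk : 1 ≤ k) (j : ℤ) (hj : 1 ≤ j)
    (p p' : Aq 1) (hp : p ∈ Rmod k 1 j) (hp' : p' ∈ Rmod k 1 j) :
    BundleIso k 1 j p p' ↔ ∃ lam : ℂ, lam ≠ 0 ∧ p' = lam • p := by
  constructor
  · exact smul_of_iso k j hj p p' hp hp'
  · rintro ⟨c, hc, rfl⟩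
    exact iso_of_smul k j p c hc
end
end

section
/- Let p = p₂₁·z·u² and p′ = p′₂₁·z·u² with p₂₁, p′₂₁ ∈ ℂ. Then E_p ≅ E_{p′} if and only if there exists λ ∈ ℂ, λ ≠ 0, with p′₂₁ = λ·p₂₁. -/
set_option synthInstance.maxHeartbeats 1000000
set_option maxHeartbeats 1000000

noncomputable section

lemma toA_eq {x y : Pz} (h : toA 2 x = toA 2 y) (i : ℕ) (hi : i < 3) :
    PowerSeries.coeff i x = PowerSeries.coeff i y := by
  have h' := Ideal.Quotient.eq.1 h
  rw [In, Ideal.mem_span_singleton, PowerSeries.X_pow_dvd_iff] at h'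
  have := h' i (by omega)
  rw [map_sub, sub_eq_zero] at this
  exact this
lemma toA_smul_s13 (c : ℂ) (l : ℤ) (i : ℕ) : c • monA 2 l i =
    toA 2 (PowerSeries.monomial i (c • LaurentPolynomial.T l)) := by
  have : PowerSeries.monomial i (c • LaurentPolynomial.T l) = c • mon l i := by
    rw [mon]; ext; simp [PowerSeries.coeff_monomial]
  rw [this]; rfl
lemma span_aux (S : Set (Aq 2)) (P : ℤ → ℕ → Prop)
    (hS : ∀ x ∈ S, ∃ l : ℤ, ∃ i : ℕ, ¬ P l i ∧ x = monA 2 l i)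
    (x : Aq 2) (hx : x ∈ Submodule.span ℂ S) :
    ∃ y : Pz, toA 2 y = x ∧ ∀ i l, P l i → (PowerSeries.coeff i y).coeff l = 0 := by
  induction hx using Submodule.span_induction with
  | mem x h =>
    obtain ⟨l, i, h1, rfl⟩ := hS x h
    refine ⟨mon l i, rfl, fun i' l' h => ?_⟩
    rw [mon, PowerSeries.coeff_monomial]
    split_ifs with hh
    · subst hh
      rw [LaurentPolynomial.T_apply, if_neg]
      rintro rfl; exact h1 h
    · simp
  | zero => exact ⟨0, map_zero _, by simp⟩
  | add x y _ _ hx hy =>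
    obtain ⟨a, rfl, ha⟩ := hx
    obtain ⟨b, rfl, hb⟩ := hy
    exact ⟨a + b, map_add _ _ _, fun i l h => by simp [ha i l h, hb i l h]⟩
  | smul c x _ hx =>
    obtain ⟨a, rfl, ha⟩ := hx
    exact ⟨c • a, rfl, fun i l h => by simp [ha i l h]⟩

lemma OU_rep (x : Aq 2) (hx : x ∈ OU 2) :
    ∃ y : Pz, toA 2 y = x ∧ ∀ i l, l < 0 → (PowerSeries.coeff i y).coeff l = 0 := by
  refine span_aux _ (fun l _ => l < 0) ?_ x hx
  rintro x ⟨l, i, h1, -, rfl⟩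
  exact ⟨l, i, by omega, rfl⟩

lemma OV_rep (x : Aq 2) (hx : x ∈ OV 1 2) :
    ∃ y : Pz, toA 2 y = x ∧ ∀ (i : ℕ) (l : ℤ), (i : ℤ) < l →
      (PowerSeries.coeff i y).coeff l = 0 := by
  refine span_aux _ (fun l i => (i : ℤ) < l) ?_ x hx
  rintro x ⟨l, i, h1, -, rfl⟩
  exact ⟨l, i, by push_cast at h1; omega, rfl⟩

lemma coeff_mul_T (f : Lz) (m l : ℤ) :
    (f * LaurentPolynomial.T m).coeff l = f.coeff (l - m) := by
  rw [LaurentPolynomial.T, AddMonoidAlgebra.coeff_mul_single_apply]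
  simp [sub_eq_add_neg]

lemma coeff_zero_of {x y : Lz} (h : x = y) (hx : ∀ l < 0, x.coeff l = 0)
    (hy : ∀ l > 0, y.coeff l = 0) (h0 : x ≠ 0) : x.coeff 0 ≠ 0 := by
  subst h
  intro h
  apply h0
  refine LaurentPolynomial.ext fun l => ?_
  rcases lt_trichotomy l 0 with hl | rfl | hl
  · simpa using hx l hl
  · simpa using h
  · simpa using hy l hl

lemma const_mem_OU (c : ℂ) : c • monA 2 0 0 ∈ OU 2 :=
  Submodule.smul_mem _ _ (Submodule.subset_span ⟨0, 0, le_rfl, by omega, rfl⟩)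

lemma const_mem_OV (c : ℂ) : c • monA 2 0 0 ∈ OV 1 2 :=
  Submodule.smul_mem _ _ (Submodule.subset_span ⟨0, 0, by simp, by omega, rfl⟩)

lemma monA_one : monA 2 0 0 = 1 := by
  rw [monA, mon, LaurentPolynomial.T_zero]
  rw [PowerSeries.monomial_zero_eq_C_apply, map_one, map_one]

lemma backward (p lam : ℂ) (h : lam ≠ 0) :
    BundleIso 1 2 2 (p • monA 2 1 2) ((lam * p) • monA 2 1 2) := by
  have hU := const_mem_OU
  have hV := const_mem_OV
  rw [monA_one] at hU hV
  have hdet : (!![lam • (1 : Aq 2), 0; 0, 1]).det * (lam⁻¹ • (1 : Aq 2)) = 1 := by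
    simp [Matrix.det_fin_two_of, smul_smul, h]
  refine ⟨!![lam • 1, 0; 0, 1], !![lam • 1, 0; 0, 1], ?_, ?_, ⟨_, hU lam⁻¹, hdet⟩,
    ⟨_, hV lam⁻¹, hdet⟩, ?_⟩
  · intro a b
    have h1 := hU 1
    rw [one_smul] at h1
    fin_cases a <;> fin_cases b
    exacts [hU lam, Submodule.zero_mem _, Submodule.zero_mem _, h1]
  · intro a b
    have h1 := hV 1
    rw [one_smul] at h1
    fin_cases a <;> fin_cases b
    exacts [hV lam, Submodule.zero_mem _, Submodule.zero_mem _, h1]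
  · rw [Mmat, Mmat]
    simp [smul_smul]

lemma forward (p q : ℂ) (h : BundleIso 1 2 2 (p • monA 2 1 2) (q • monA 2 1 2)) :
    ∃ s t : ℂ, s ≠ 0 ∧ t ≠ 0 ∧ q * t = p * s := by
  obtain ⟨A, B, hA, hB, ⟨w, -, hw⟩, -, hE⟩ := h
  have e00 := congrFun (congrFun hE 0) 0
  have e01 := congrFun (congrFun hE 0) 1
  have e11 := congrFun (congrFun hE 1) 1
  rw [Matrix.det_fin_two] at hw
  simp only [Matrix.mul_apply, Fin.sum_univ_two, Mmat, Matrix.of_apply, Matrix.cons_val_zero,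
    Matrix.cons_val_one, Matrix.cons_val', Matrix.cons_val_fin_one, mul_zero, zero_mul, add_zero,
    zero_add] at e00 e01 e11
  obtain ⟨a, ha, ha'⟩ := OU_rep _ (hA 0 0)
  obtain ⟨b, hb, hb'⟩ := OU_rep _ (hA 0 1)
  obtain ⟨c, hc, -⟩ := OU_rep _ (hA 1 0)
  obtain ⟨d, hd, hd'⟩ := OU_rep _ (hA 1 1)
  obtain ⟨a₁, ha₁, ha₁'⟩ := OV_rep _ (hB 0 0)
  obtain ⟨b₁, hb₁, hb₁'⟩ := OV_rep _ (hB 0 1)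
  obtain ⟨c₁, hc₁, -⟩ := OV_rep _ (hB 1 0)
  obtain ⟨d₁, hd₁, hd₁'⟩ := OV_rep _ (hB 1 1)
  obtain ⟨w, rfl⟩ := Ideal.Quotient.mk_surjective w
  change _ * toA 2 w = 1 at hw
  rw [← ha, ← hb, ← hc, ← hd, ← map_mul, ← map_mul, ← map_sub, ← map_mul,
    ← map_one (toA 2)] at hw
  rw [← ha, ← hc, ← ha₁, toA_smul_s13, monA, ← map_mul, ← map_mul, ← map_mul, ← map_add] at e00
  rw [← hb, ← hd, ← ha₁, ← hb₁, toA_smul_s13, toA_smul_s13, monA, monA, ← map_mul, ← map_mul,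
    ← map_mul, ← map_mul, ← map_add, ← map_add] at e01
  rw [← hd, ← hc₁, ← hd₁, toA_smul_s13, monA, ← map_mul, ← map_mul, ← map_mul, ← map_add] at e11
  have f00 := toA_eq e00 0 (by omega)
  have f01 := toA_eq e01 0 (by omega)
  have f11 := toA_eq e11 0 (by omega)
  have g01 := toA_eq e01 2 (by omega)
  have hw0 := toA_eq hw 0 (by omega)
  have K : ∀ f : Lz, PowerSeries.constantCoeff (PowerSeries.monomial 2 f) = 0 := by
    intro f
    rw [← PowerSeries.coeff_zero_eq_constantCoeff_apply, PowerSeries.coeff_monomial]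
    simp
  simp [PowerSeries.coeff_mul, Finset.Nat.antidiagonal_succ, mon, PowerSeries.coeff_monomial,
    K] at f00 f01 f11 g01 hw0
  have ca := ha' 0
  have cb := hb' 0
  have cd := hd' 0
  have ca₁ := ha₁' 0
  have cb₁ := hb₁' 0
  have cd₁ := hd₁' 0
  simp only [PowerSeries.coeff_zero_eq_constantCoeff, Nat.cast_zero] at ca cb cd ca₁ cb₁ cd₁
  have haa : PowerSeries.constantCoeff a = PowerSeries.constantCoeff a₁ := (f00.resolve_right (LaurentPolynomial.isUnit_T _).ne_zero).symm
  have hdd : PowerSeries.constantCoeff d = PowerSeries.constantCoeff d₁ := (f11.resolve_right (LaurentPolynomial.isUnit_T _).ne_zero).symm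
  have hb0 : PowerSeries.constantCoeff b = 0 := by
    refine LaurentPolynomial.ext fun l => ?_
    rcases lt_or_ge l 0 with hl | hl
    · simpa using cb l hl
    · have := congrArg (fun f : Lz => f.coeff (l + 2)) f01
      simp only [coeff_mul_T] at this
      rw [cb₁ _ (by omega), add_sub_cancel_right] at this
      simpa using this.symm
  rw [hb0, zero_mul, sub_zero] at hw0
  have ha0 : PowerSeries.constantCoeff a ≠ 0 := by
    intro h
    simp [h] at hw0
  have hd0 : PowerSeries.constantCoeff d ≠ 0 := by
    intro h
    simp [h] at hw0
  refine ⟨_, _, coeff_zero_of haa ca ca₁ ha0, coeff_zero_of hdd cd cd₁ hd0, ?_⟩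
  have := congrArg (fun f : Lz => f.coeff 1) g01
  simp only [AddMonoidAlgebra.coeff_add, AddMonoidAlgebra.coeff_smul, Finsupp.add_apply,
    Finsupp.smul_apply, coeff_mul_T] at this
  rw [hb₁' 2 _ (by norm_num), hb' 2 _ (by norm_num), ← haa] at this
  simpa using this.symm

/-- on `Z_1^{(2)}` (`k = 1`, `j = 2`, `n = 2`), for `p = p₂₁ z u²` and
`p′ = p′₂₁ z u²`: `E_p ≅ E_{p′}` iff there is `λ ≠ 0` with `p′₂₁ = λ p₂₁`. -/
theorem statement13 (p21 q21 : ℂ) :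
    BundleIso 1 2 2 (p21 • monA 2 1 2) (q21 • monA 2 1 2) ↔
    ∃ lam : ℂ, lam ≠ 0 ∧ q21 = lam * p21 := by
  constructor
  · intro h
    obtain ⟨s, t, hs, ht, h⟩ := forward _ _ h
    exact ⟨s / t, div_ne_zero hs ht, by field_simp; linear_combination h⟩
  · rintro ⟨lam, h, rfl⟩
    exact backward _ _ h
end
end
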